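/- arXiv:1407.7012 — 4 statements merged into one kernel-verified Lean document; each statement's English description precedes it below -/
import Mathlib

section
/- Let f ∈ ℤ[k] be a polynomial whose degree is positive and even and whose leading coefficient is a square in ℤ. If the set of integers k₀ such that f(k₀) is a square in ℤ is infinite, then f is the square of a polynomial: there exists g ∈ ℚ[k] such that f = g² in ℚ[k]. -/
open Polynomial in
lemma aux_step (F : ℚ[X]) (n : ℕ) (a : ℚ) (ha : a ≠ 0) (hF : F.natDegree = 2 * n)
    (hl : F.coeff (2 * n) = a ^ 2) (j : ℕ) (hj : j ≤ n) :
    ∃ g : ℚ[X], g.coeff n = a ∧ (∀ i, n < i → g.coeff i = 0) ∧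
      ∀ i, 2 * n ≤ i + j → (F - g ^ 2).coeff i = 0 := by
  induction j with
  | zero =>
    refine ⟨C a * X ^ n, by simp, ?_, ?_⟩
    · intro i hi
      simp [coeff_X_pow]; omega
    · intro i hi
      have e : (C a * X ^ n : ℚ[X]) ^ 2 = C (a ^ 2) * X ^ (2 * n) := by
        rw [mul_pow, ← pow_mul, C_pow, mul_comm n 2]
      rw [e, coeff_sub, coeff_C_mul, coeff_X_pow]
      rcases eq_or_lt_of_le hi with h | h
      · simp at h; subst h; simp [hl]
      · rw [coeff_eq_zero_of_natDegree_lt (by omega), if_neg (by omega)]; simp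
  | succ j ih =>
    obtain ⟨g, h1, h2, h3⟩ := ih (by omega)
    obtain ⟨t, rfl⟩ : ∃ t, n = t + j + 1 := ⟨n - j - 1, by omega⟩
    set c := (F - g ^ 2).coeff (2 * t + j + 1) / (2 * a) with hc
    refine ⟨g + C c * X ^ t, ?_, ?_, ?_⟩
    · rw [coeff_add, coeff_C_mul, coeff_X_pow, if_neg (by omega), h1]; simp
    · intro i hi
      rw [coeff_add, coeff_C_mul, coeff_X_pow, if_neg (by omega), h2 i hi]; simp
    · intro i hi
      have e : F - (g + C c * X ^ t) ^ 2
          = (F - g ^ 2) - C (2 * c) * (g * X ^ t) - C (c ^ 2) * X ^ (2 * t) := by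
        simp only [C_mul, C_pow, C_ofNat]
        ring
      rw [e, coeff_sub, coeff_sub, coeff_C_mul, coeff_C_mul, coeff_X_pow,
        if_neg (by omega : ¬ i = 2 * t), coeff_mul_X_pow', if_pos (by omega : t ≤ i)]
      rcases eq_or_lt_of_le hi with h | h
      · obtain rfl : i = 2 * t + j + 1 := by omega
        rw [show 2 * t + j + 1 - t = t + j + 1 by omega, h1, hc]
        field_simp
        ring
      · rw [h3 i (by omega), h2 _ (by omega)]; ring

open Polynomial in
theorem aux_main (f : ℤ[X]) (G : ℤ[X]) (D : ℤ) (hR : C (D ^ 2) * f - G ^ 2 ≠ 0)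
    (hd : (C (D ^ 2) * f - G ^ 2).degree < G.degree)
    (hinf : {k₀ : ℤ | ∃ a : ℤ, f.eval k₀ = a ^ 2}.Infinite) : False := by
  set R := C (D ^ 2) * f - G ^ 2 with hRdef
  have inj : Function.Injective (Int.castRingHom ℝ) := Int.cast_injective
  have h1 : (R.map (Int.castRingHom ℝ)).degree < (G.map (Int.castRingHom ℝ)).degree := by
    rwa [degree_map_eq_of_injective inj, degree_map_eq_of_injective inj]
  have h2 := (isLittleO_cobounded_of_degree_lt h1).bound (c := 1 / 2) (by norm_num)
  have h3 : Filter.Tendsto (fun k : ℤ => (k : ℝ)) Filter.cofinite (Bornology.cobounded ℝ) := by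
    rw [Metric.cobounded_eq_cocompact]
    exact Int.tendsto_coe_cofinite
  have h4 := h3.eventually h2
  have h5 : ∀ᶠ k : ℤ in Filter.cofinite, R.eval k ≠ 0 := by
    exact eventually_cofinite_not_isRoot hR
  have h6 : ∃ᶠ k : ℤ in Filter.cofinite, ∃ a : ℤ, f.eval k = a ^ 2 :=
    Filter.frequently_cofinite_iff_infinite.2 hinf
  obtain ⟨k, ⟨a, ha⟩, hk1, hk2⟩ := (h6.and_eventually (h4.and h5)).exists
  have e1 : eval (k : ℝ) (R.map (Int.castRingHom ℝ)) = ((R.eval k : ℤ) : ℝ) := by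
    simpa using eval_intCast_map (Int.castRingHom ℝ) R k
  have e2 : eval (k : ℝ) (G.map (Int.castRingHom ℝ)) = ((G.eval k : ℤ) : ℝ) := by
    simpa using eval_intCast_map (Int.castRingHom ℝ) G k
  rw [e1, e2, Real.norm_eq_abs, Real.norm_eq_abs] at hk1
  have hk3 : 2 * |R.eval k| ≤ |G.eval k| := by
    have : (2 : ℝ) * |((R.eval k : ℤ) : ℝ)| ≤ |((G.eval k : ℤ) : ℝ)| := by linarith
    exact_mod_cast this
  have e3 : R.eval k = (D * a) ^ 2 - (G.eval k) ^ 2 := by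
    simp only [hRdef, eval_sub, eval_mul, eval_C, eval_pow, ha]; ring
  rw [← sq_abs (D * a), ← sq_abs (G.eval k)] at e3
  have hp : 1 ≤ |R.eval k| := Int.one_le_abs hk2
  generalize R.eval k = r at *
  generalize |G.eval k| = g at *
  have hm := abs_nonneg (D * a)
  generalize |D * a| = m at *
  rcases lt_trichotomy m g with h | h | h
  · have : g ^ 2 - m ^ 2 ≤ |r| := by rw [e3, abs_sub_comm]; exact le_abs_self _
    nlinarith
  · apply hk2; rw [e3, h]; ring
  · have : m ^ 2 - g ^ 2 ≤ |r| := by rw [e3]; exact le_abs_self _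
    nlinarith

open Polynomial in
/-- let `f ∈ ℤ[k]` have positive even degree and square leading coefficient.
If `f(k₀)` is a square in `ℤ` for infinitely many integers `k₀`, then `f` is the square of a
polynomial `g ∈ ℚ[k]`. -/
theorem stmt_15 (f : Polynomial ℤ) (hdeg : 0 < f.natDegree) (heven : Even f.natDegree)
    (hlead : ∃ a : ℤ, f.leadingCoeff = a ^ 2)
    (hinf : {k₀ : ℤ | ∃ a : ℤ, f.eval k₀ = a ^ 2}.Infinite) :
    ∃ g : Polynomial ℚ, f.map (Int.castRingHom ℚ) = g ^ 2 := by
  have inj : Function.Injective (Int.castRingHom ℚ) := Int.cast_injective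
  obtain ⟨n, hn⟩ := heven
  obtain ⟨a, ha⟩ := hlead
  have ha0 : a ≠ 0 := by
    rintro rfl
    have : f = 0 := by simpa using ha
    simp [this] at hdeg
  obtain ⟨g, h1, h2, h3⟩ := aux_step (f.map (Int.castRingHom ℚ)) n a (by exact_mod_cast ha0)
    (by rw [natDegree_map_eq_of_injective inj]; omega)
    (by
      rw [coeff_map, two_mul, ← hn]
      change Int.castRingHom ℚ f.leadingCoeff = _
      rw [ha]; simp) n le_rfl
  refine ⟨g, ?_⟩
  obtain ⟨D, hD, hG⟩ := IsLocalization.integerNormalization_spec (nonZeroDivisors ℤ) g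
  have hD0 : D ≠ 0 := nonZeroDivisors.ne_zero hD
  set G := IsLocalization.integerNormalization (nonZeroDivisors ℤ) g
  have hG' : G.map (Int.castRingHom ℚ) = C (D : ℚ) * g := by
    have : algebraMap ℤ ℚ = Int.castRingHom ℚ := rfl
    rw [← this, hG]
    ext i; simp
  have hR : (C (D ^ 2) * f - G ^ 2).map (Int.castRingHom ℚ)
      = C ((D : ℚ) ^ 2) * (f.map (Int.castRingHom ℚ) - g ^ 2) := by
    rw [Polynomial.map_sub, Polynomial.map_mul, Polynomial.map_pow, hG', map_C, map_pow,
      eq_intCast, C_pow]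
    ring
  have hDq : (D : ℚ) ≠ 0 := by exact_mod_cast hD0
  by_contra hne
  have hne' : f.map (Int.castRingHom ℚ) - g ^ 2 ≠ 0 := sub_ne_zero.2 hne
  refine aux_main f G D ?_ ?_ hinf
  · intro h0
    rw [h0, Polynomial.map_zero] at hR
    exact mul_ne_zero (C_ne_zero.2 (pow_ne_zero 2 hDq)) hne' hR.symm
  · rw [← degree_map_eq_of_injective inj, hR, ← degree_map_eq_of_injective inj (p := G), hG',
      degree_C_mul (pow_ne_zero 2 hDq), degree_C_mul hDq]
    refine lt_of_lt_of_le (b := (n : WithBot ℕ)) ?_ ?_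
    · rw [degree_lt_iff_coeff_zero]
      intro i hi
      exact h3 i (by omega)
    · apply le_degree_of_ne_zero
      rw [h1]; exact_mod_cast ha0
end

section
/- Fix an integer n ≥ 2. Then the set of nonzero integers k₀ such that δ_n(k₀) is a square in ℤ is finite. -/
open Polynomial in
/-- One can correct `P` to an approximate square root of `f`. -/
theorem runge_sqrt (f : ℚ[X]) (d : ℕ) (m : ℕ) : m ≤ d → ∀ P : ℚ[X], P.natDegree = d → P ≠ 0 →
    (f - P ^ 2).degree < ((d + m : ℕ) : WithBot ℕ) →
    ∃ Q : ℚ[X], Q.natDegree = d ∧ Q ≠ 0 ∧ (f - Q ^ 2).degree < (d : WithBot ℕ) := by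
  induction m with
  | zero =>
    intro _ P h1 h2 h3
    exact ⟨P, h1, h2, by simpa using h3⟩
  | succ m ih =>
    intro hm P h1 h2 h3
    have hl : P.coeff d ≠ 0 := by
      rw [← h1]; exact leadingCoeff_ne_zero.mpr h2
    set a : ℚ := (f - P ^ 2).coeff (d + m) / (2 * P.coeff d) with ha
    have hcd : (P + C a * X ^ m).coeff d = P.coeff d := by
      simp [coeff_X_pow, show d ≠ m by omega]
    have hne : P + C a * X ^ m ≠ 0 := by
      intro h
      rw [h] at hcd
      exact hl (by simpa using hcd.symm)
    refine ih (by omega) (P + C a * X ^ m) ?_ hne ?_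
    · apply le_antisymm
      · refine (natDegree_add_le _ _).trans (max_le h1.le ?_)
        exact (natDegree_C_mul_X_pow_le a m).trans (by omega)
      · exact le_natDegree_of_ne_zero (by rw [hcd]; exact hl)
    · rw [degree_lt_iff_coeff_zero] at h3 ⊢
      intro j hj
      have e : f - (P + C a * X ^ m) ^ 2
          = (f - P ^ 2) - C (2 * a) * (P * X ^ m) - C (a ^ 2) * X ^ (2 * m) := by
        simp only [C_mul, C_pow, C_ofNat]
        ring
      obtain ⟨i, rfl⟩ : ∃ i, j = i + m := ⟨j - m, by omega⟩
      rw [e, coeff_sub, coeff_sub, coeff_C_mul, coeff_C_mul, coeff_mul_X_pow, coeff_X_pow,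
        if_neg (by omega)]
      by_cases hi : i = d
      · subst hi
        rw [ha]
        field_simp
        ring
      · rw [h3 _ (by omega), coeff_eq_zero_of_natDegree_lt (by omega : P.natDegree < i)]
        simp

open Polynomial Filter in
theorem eventually_abs_lt (p r : ℤ[X]) (h : r.degree < p.degree) :
    ∀ᶠ k : ℤ in atTop, |r.eval k| < |p.eval k| := by
  have hinj : Function.Injective (Int.castRingHom ℝ) := Int.cast_injective
  have h' : (r.map (Int.castRingHom ℝ)).degree < (p.map (Int.castRingHom ℝ)).degree := by
    rwa [degree_map_eq_of_injective hinj, degree_map_eq_of_injective hinj]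
  have hp : p.map (Int.castRingHom ℝ) ≠ 0 := by
    rintro h0
    rw [h0] at h'
    simp at h'
  have h1 := Polynomial.div_tendsto_zero_of_degree_lt _ _ h'
  have h2 := h1.abs.eventually (gt_mem_nhds (by simp : |(0:ℝ)| < 1))
  have h3 := Polynomial.eventually_no_roots _ hp
  have h4 := (tendsto_intCast_atTop_atTop (R := ℝ)).eventually (h2.and h3)
  filter_upwards [h4] with k hk
  obtain ⟨hk1, hk2⟩ := hk
  have hk3 : 0 < |eval (k:ℝ) (p.map (Int.castRingHom ℝ))| := abs_pos.mpr hk2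
  rw [abs_div, div_lt_one hk3] at hk1
  have e : ∀ q : ℤ[X], eval (k:ℝ) (q.map (Int.castRingHom ℝ)) = ((q.eval k : ℤ) : ℝ) := by
    intro q
    have := eval_map_apply (Int.castRingHom ℝ) (p := q) k
    simpa using this
  rw [e, e] at hk1
  exact_mod_cast hk1

open Polynomial Filter in
theorem finite_abs_le (p r : ℤ[X]) (h : r.degree < p.degree) :
    {k : ℤ | |p.eval k| ≤ |r.eval k|}.Finite := by
  have hdeg : ∀ q : ℤ[X], (q.comp (-X)).degree = q.degree := by
    intro q
    exact degree_comp_neg_X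
  have h1 := eventually_abs_lt p r h
  have h2 := eventually_abs_lt (p.comp (-X)) (r.comp (-X)) (by rwa [hdeg, hdeg])
  rw [eventually_atTop] at h1 h2
  obtain ⟨A, hA⟩ := h1
  obtain ⟨B, hB⟩ := h2
  refine (Set.finite_Icc (-B) A).subset ?_
  intro k hk
  simp only [Set.mem_setOf_eq] at hk
  constructor
  · by_contra hlt
    have := hB (-k) (by omega)
    simp at this
    omega
  · by_contra hlt
    have := hA k (by omega)
    omega

open Polynomial in
theorem runge_finite (f P : ℤ[X]) (d : ℕ) (hP : P.natDegree = d) (hP0 : P ≠ 0)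
    (hf : (f - P ^ 2).degree < ((d + d : ℕ) : WithBot ℕ))
    (hns : ¬ IsSquare (f.eval 1)) :
    {k : ℤ | ∃ a : ℤ, f.eval k = a ^ 2}.Finite := by
  have hinj : Function.Injective (Int.castRingHom ℚ) := Int.cast_injective
  obtain ⟨Q, hQ, hQ0, hQd⟩ := runge_sqrt (f.map (Int.castRingHom ℚ)) d d le_rfl
    (P.map (Int.castRingHom ℚ)) (by rw [natDegree_map_eq_of_injective hinj, hP])
    ((Polynomial.map_ne_zero_iff hinj).mpr hP0)
    (by
      rw [← Polynomial.map_pow, ← Polynomial.map_sub, degree_map_eq_of_injective hinj]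
      exact hf)
  obtain ⟨b, hb⟩ := IsLocalization.integerNormalization_map_to_map (nonZeroDivisors ℤ) Q
  set p := IsLocalization.integerNormalization (nonZeroDivisors ℤ) Q with hp
  obtain ⟨D, hD⟩ := b
  have hD0 : D ≠ 0 := nonZeroDivisors.ne_zero hD
  have hb' : p.map (Int.castRingHom ℚ) = C (D : ℚ) * Q := by
    have : algebraMap ℤ ℚ = Int.castRingHom ℚ := rfl
    rw [this] at hb
    rw [hb]
    ext i
    simp
  have hDQ : (D : ℚ) ≠ 0 := by exact_mod_cast hD0
  set r := C (D ^ 2) * f - p ^ 2 with hr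
  have hpd : p.degree = d := by
    rw [← degree_map_eq_of_injective hinj, hb', degree_C_mul hDQ, degree_eq_natDegree hQ0, hQ]
  have hrd : r.degree < d := by
    rw [← degree_map_eq_of_injective hinj]
    have : r.map (Int.castRingHom ℚ)
        = C ((D : ℚ) ^ 2) * (f.map (Int.castRingHom ℚ) - Q ^ 2) := by
      rw [hr, Polynomial.map_sub, Polynomial.map_mul, Polynomial.map_pow, hb']
      simp
      ring
    rw [this, degree_C_mul (pow_ne_zero 2 hDQ)]
    exact hQd
  have hr0 : r ≠ 0 := by
    intro h0
    have h1 : D ^ 2 * f.eval 1 = (p.eval 1) ^ 2 := by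
      have := congrArg (eval 1) h0
      simp [hr] at this
      linarith
    have h2 : D ∣ p.eval 1 := by
      rw [← Int.pow_dvd_pow_iff (n := 2) (by norm_num)]
      exact ⟨_, h1.symm⟩
    obtain ⟨c, hc⟩ := h2
    apply hns
    refine ⟨c, ?_⟩
    rw [hc] at h1
    apply mul_left_cancel₀ (pow_ne_zero 2 hD0)
    rw [h1]
    ring
  refine ((finite_abs_le p r (by rw [hpd]; exact hrd)).union
    (r.roots.toFinset.finite_toSet)).subset ?_
  rintro k ⟨a, hk⟩
  by_cases hroot : r.eval k = 0
  · right
    simp [hr0, hroot]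
  · left
    simp only [Set.mem_setOf_eq]
    have e : r.eval k = (D * a - p.eval k) * (D * a + p.eval k) := by
      rw [hr]
      simp [hk]
      ring
    rw [e] at hroot
    have n1 := abs_pos.mpr (left_ne_zero_of_mul hroot)
    have n2 := abs_pos.mpr (right_ne_zero_of_mul hroot)
    rw [e, abs_mul]
    have t : 2 * |p.eval k| ≤ |D * a - p.eval k| + |D * a + p.eval k| := by
      have := abs_sub (D * a + p.eval k) (D * a - p.eval k)
      rw [show (D * a + p.eval k) - (D * a - p.eval k) = 2 * p.eval k by ring, abs_mul] at this
      simp at this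
      linarith
    nlinarith

open Polynomial in
theorem main_facts (δ ε : ℕ → ℤ[X])
    (hδ1 : δ 1 = C 2 * X ^ 2)
    (hε1 : ε 1 = X)
    (hδ : ∀ n, 2 ≤ n → δ n = (δ (n - 1)) ^ 2 + (ε (n - 1)) ^ 2)
    (hε : ∀ n, 2 ≤ n → X * ε n = δ (n - 1) * ε (n - 1)) (n : ℕ) :
    (δ (n + 1)).natDegree = 2 ^ (n + 1) ∧ (ε (n + 1)).natDegree < 2 ^ (n + 1) ∧
    (δ (n + 1)).eval 1 % 3 = 2 ∧ (ε (n + 1)).eval 1 % 3 ≠ 0 := by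
  induction n with
  | zero =>
    rw [zero_add, hδ1, hε1]
    refine ⟨?_, ?_, ?_, ?_⟩
    · exact natDegree_C_mul_X_pow 2 2 (by norm_num)
    · simp
    · simp
    · simp
  | succ n ih =>
    obtain ⟨h1, h2, h3, h4⟩ := ih
    have a := hδ (n + 1 + 1) (by omega)
    have b := hε (n + 1 + 1) (by omega)
    simp only [Nat.add_sub_cancel] at a b
    refine ⟨?_, ?_, ?_, ?_⟩
    · rw [a, natDegree_add_eq_left_of_natDegree_lt, natDegree_pow, h1]
      · ring
      · rw [natDegree_pow, natDegree_pow]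
        omega
    · by_cases h0 : ε (n + 1 + 1) = 0
      · rw [h0]
        simp
      · have := congrArg natDegree b
        rw [natDegree_X_mul h0] at this
        have h5 := natDegree_mul_le (p := δ (n + 1)) (q := ε (n + 1))
        rw [pow_succ 2 (n + 1)]
        omega
    · rw [a]
      simp only [eval_add, eval_pow]
      have : (ε (n + 1)).eval 1 % 3 = 1 ∨ (ε (n + 1)).eval 1 % 3 = 2 := by omega
      rcases this with h | h <;> simp [Int.add_emod, pow_two, Int.mul_emod, h3, h]
    · have := congrArg (eval 1) b
      simp only [eval_mul, eval_X, one_mul] at this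
      rw [this]
      have : (ε (n + 1)).eval 1 % 3 = 1 ∨ (ε (n + 1)).eval 1 % 3 = 2 := by omega
      rcases this with h | h <;> simp [Int.mul_emod, h3, h]


/-- for the sequences `δ_n, ε_n ∈ ℤ[k]` given by `δ_1 = 2k²`, `ε_1 = k`,
`δ_n = δ_{n−1}² + ε_{n−1}²` and `k·ε_n = δ_{n−1}·ε_{n−1}` (for `n ≥ 2`): for every fixed
`n ≥ 2`, the set of nonzero integers `k₀` such that `δ_n(k₀)` is a square in `ℤ` is finite. -/
theorem stmt_16 (δ ε : ℕ → Polynomial ℤ)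
    (hδ1 : δ 1 = Polynomial.C 2 * Polynomial.X ^ 2)
    (hε1 : ε 1 = Polynomial.X)
    (hδ : ∀ n, 2 ≤ n → δ n = (δ (n - 1)) ^ 2 + (ε (n - 1)) ^ 2)
    (hε : ∀ n, 2 ≤ n → Polynomial.X * ε n = δ (n - 1) * ε (n - 1))
    (n : ℕ) (hn : 2 ≤ n) :
    {k₀ : ℤ | k₀ ≠ 0 ∧ ∃ a : ℤ, (δ n).eval k₀ = a ^ 2}.Finite := by
  obtain ⟨m, rfl⟩ : ∃ m, n = m + 1 + 1 := ⟨n - 2, by omega⟩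
  obtain ⟨h1, h2, -, -⟩ := main_facts δ ε hδ1 hε1 hδ hε m
  obtain ⟨-, -, h3, -⟩ := main_facts δ ε hδ1 hε1 hδ hε (m + 1)
  have a := hδ (m + 1 + 1) (by omega)
  simp only [Nat.add_sub_cancel] at a
  refine (runge_finite (δ (m + 1 + 1)) (δ (m + 1)) (2 ^ (m + 1)) h1 ?_ ?_ ?_).subset ?_
  · intro h0
    rw [h0] at h1
    have : 0 < 2 ^ (m + 1) := by positivity
    rw [Polynomial.natDegree_zero] at h1
    omega
  · rw [a, add_sub_cancel_left]
    refine lt_of_le_of_lt Polynomial.degree_le_natDegree ?_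
    rw [Polynomial.natDegree_pow]
    exact_mod_cast (by omega)
  · rintro ⟨c, hc⟩
    rw [hc] at h3
    have : c % 3 = 0 ∨ c % 3 = 1 ∨ c % 3 = 2 := by omega
    rcases this with h | h | h <;> simp [Int.mul_emod, h] at h3
  · rintro k ⟨-, hk⟩
    exact hk
end

section
/- Let k₀ be an integer whose residue modulo 11 lies in {1, 2, 5, 6, 9, 10}. Then for every n ≥ 1, the integer δ_n(k₀) is not a square in ℤ. -/
/-- Invariant modulo 11 satisfied for `n ≥ 3`. -/
def Inv11 (k d e : ZMod 11) : Prop :=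
  (k ^ 2 = 1 ∧ ((d = 7 ∧ e ^ 2 = 1) ∨ (d = 6 ∧ e ^ 2 = 5) ∨ (d = 8 ∧ e ^ 2 = 4) ∨
    (d = 2 ∧ e ^ 2 = 3))) ∨
  (k ^ 2 = 4 ∧ d = 2 ∧ e ^ 2 = 9) ∨ (k ^ 2 = 3 ∧ d = 6 ∧ e ^ 2 = 3)

instance (k d e : ZMod 11) : Decidable (Inv11 k d e) := by
  unfold Inv11; infer_instance

set_option maxRecDepth 100000 in
set_option maxHeartbeats 4000000 in
lemma inv11_step : ∀ k d e : ZMod 11, Inv11 k d e → ∀ e' : ZMod 11, k * e' = d * e →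
    Inv11 k (d ^ 2 + e ^ 2) e' := by
  decide

set_option maxRecDepth 100000 in
set_option maxHeartbeats 4000000 in
lemma inv11_base : ∀ k : ZMod 11, (k = 1 ∨ k = 2 ∨ k = 5 ∨ k = 6 ∨ k = 9 ∨ k = 10) →
    ∀ e2 : ZMod 11, k * e2 = 2 * k ^ 2 * k → ∀ e3 : ZMod 11,
    k * e3 = ((2 * k ^ 2) ^ 2 + k ^ 2) * e2 →
    Inv11 k (((2 * k ^ 2) ^ 2 + k ^ 2) ^ 2 + e2 ^ 2) e3 := by
  decide

set_option maxRecDepth 100000 in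
set_option maxHeartbeats 4000000 in
lemma inv11_nonsq : ∀ k d e : ZMod 11, Inv11 k d e → ∀ a : ZMod 11, d ≠ a ^ 2 := by
  decide

set_option maxRecDepth 100000 in
lemma first11_nonsq : ∀ k : ZMod 11, (k = 1 ∨ k = 2 ∨ k = 5 ∨ k = 6 ∨ k = 9 ∨ k = 10) →
    ∀ a : ZMod 11, 2 * k ^ 2 ≠ a ^ 2 := by
  decide

lemma second_nonsq (k a : ℤ) (hk : k ≠ 0) : (2 * k ^ 2) ^ 2 + k ^ 2 ≠ a ^ 2 := by
  intro h
  have hd : k ^ 2 ∣ a ^ 2 := ⟨4 * k ^ 2 + 1, by rw [← h]; ring⟩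
  obtain ⟨b, rfl⟩ := (Int.pow_dvd_pow_iff (by norm_num)).1 hd
  have hk2 : 0 < k ^ 2 := by positivity
  have hb : 4 * k ^ 2 + 1 = b ^ 2 := by
    apply mul_left_cancel₀ hk2.ne'
    linarith
  have hb' : (2 * |k|) ^ 2 + 1 = |b| ^ 2 := by
    rw [mul_pow, sq_abs, sq_abs]; linarith
  have hkp : 0 < |k| := abs_pos.2 hk
  have hbp := abs_nonneg b
  have h1 : 2 * |k| < |b| := by nlinarith
  nlinarith

/-- for the sequences `δ_n, ε_n ∈ ℤ[k]` given by `δ_1 = 2k²`, `ε_1 = k`,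
`δ_n = δ_{n−1}² + ε_{n−1}²` and `k·ε_n = δ_{n−1}·ε_{n−1}` (for `n ≥ 2`): if the residue of
`k₀` modulo `11` lies in `{1, 2, 5, 6, 9, 10}`, then for every `n ≥ 1` the integer `δ_n(k₀)`
is not a square in `ℤ`. -/
theorem stmt_17 (δ ε : ℕ → Polynomial ℤ)
    (hδ1 : δ 1 = Polynomial.C 2 * Polynomial.X ^ 2)
    (hε1 : ε 1 = Polynomial.X)
    (hδ : ∀ n, 2 ≤ n → δ n = (δ (n - 1)) ^ 2 + (ε (n - 1)) ^ 2)
    (hε : ∀ n, 2 ≤ n → Polynomial.X * ε n = δ (n - 1) * ε (n - 1))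
    (k₀ : ℤ) (hk : (k₀ : ZMod 11) ∈ ({1, 2, 5, 6, 9, 10} : Set (ZMod 11))) :
    ∀ n, 1 ≤ n → ¬ ∃ a : ℤ, (δ n).eval k₀ = a ^ 2 := by
  have hk' : (k₀ : ZMod 11) = 1 ∨ (k₀ : ZMod 11) = 2 ∨ (k₀ : ZMod 11) = 5 ∨
      (k₀ : ZMod 11) = 6 ∨ (k₀ : ZMod 11) = 9 ∨ (k₀ : ZMod 11) = 10 := by
    simpa using hk
  have hk0 : k₀ ≠ 0 := by
    rintro rfl
    revert hk'
    rw [Int.cast_zero]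
    decide
  have e1 : (ε 1).eval k₀ = k₀ := by simp [hε1]
  have d1 : (δ 1).eval k₀ = 2 * k₀ ^ 2 := by simp [hδ1]
  have ds : ∀ n, (δ (n + 2)).eval k₀ = (δ (n + 1)).eval k₀ ^ 2 + (ε (n + 1)).eval k₀ ^ 2 := by
    intro n
    rw [hδ (n + 2) (by omega)]
    simp
  have es : ∀ n, k₀ * (ε (n + 2)).eval k₀ = (δ (n + 1)).eval k₀ * (ε (n + 1)).eval k₀ := by
    intro n
    have h := congrArg (Polynomial.eval k₀) (hε (n + 2) (by omega))
    simpa using h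
  have es' : ∀ n, (k₀ : ZMod 11) * (((ε (n + 2)).eval k₀ : ℤ) : ZMod 11) =
      (((δ (n + 1)).eval k₀ : ℤ) : ZMod 11) * (((ε (n + 1)).eval k₀ : ℤ) : ZMod 11) := by
    intro n
    exact_mod_cast congrArg (Int.cast : ℤ → ZMod 11) (es n)
  have d2 : (δ 2).eval k₀ = (2 * k₀ ^ 2) ^ 2 + k₀ ^ 2 := by
    rw [ds 0, zero_add, d1, e1]
  have key : ∀ n, Inv11 (k₀ : ZMod 11) (((δ (n + 3)).eval k₀ : ℤ) : ZMod 11)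
      (((ε (n + 3)).eval k₀ : ℤ) : ZMod 11) := by
    intro n
    induction n with
    | zero =>
      have a := es' 0
      have b := es' 1
      have c := ds 1
      simp only [zero_add, Nat.reduceAdd] at a b c ⊢
      rw [d1, e1] at a
      rw [d2] at b c
      rw [c]
      push_cast at a b ⊢
      exact inv11_base _ hk' _ a _ b
    | succ n ih =>
      have b := es' (n + 2)
      rw [show n + 1 + 3 = n + 2 + 2 from rfl, ds (n + 2)]
      push_cast
      exact inv11_step _ _ _ ih _ b
  rintro n hn ⟨a, ha⟩
  match n, hn with
  | 1, _ =>
    rw [d1] at ha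
    have h := congrArg (Int.cast : ℤ → ZMod 11) ha
    push_cast at h
    exact first11_nonsq _ hk' _ h
  | 2, _ =>
    rw [d2] at ha
    exact second_nonsq _ _ hk0 ha
  | n + 3, _ =>
    have h := congrArg (Int.cast : ℤ → ZMod 11) ha
    push_cast at h
    exact inv11_nonsq _ _ _ (key n) _ h
end

section
/- For every integer k₀ with 1 ≤ |k₀| ≤ 10^6 and every n ≥ 1, the integer δ_n(k₀) is not a square in ℤ. -/
namespace SqFree18

/-- One step of the recursion modulo `p`; `ki` is the inverse of `k`. -/
def nxt (p ki : ℕ) (s : ℕ × ℕ) : ℕ × ℕ :=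
  ((s.1 * s.1 + s.2 * s.2) % p, s.1 * s.2 * ki % p)

/-- Iterated steps. -/
def adv (p ki : ℕ) : ℕ → ℕ × ℕ → ℕ × ℕ
  | 0, s => s
  | i + 1, s => adv p ki i (nxt p ki s)

/-- Euler's criterion for being a non-residue. -/
def nonres (p d : ℕ) : Bool := Nat.beq (d ^ ((p - 1) / 2) % p) (p - 1)

/-- The first coordinates at the even steps `0, 2, ..., 2 j` are non-residues. -/
def run (p ki : ℕ) : ℕ → ℕ × ℕ → Bool
  | 0, s => nonres p s.1
  | j + 1, s => nonres p s.1 && run p ki j (nxt p ki (nxt p ki s))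

/-- Check of a certificate. -/
def okk (p s a M L ki : ℕ) : Bool :=
  Nat.beq (a * ki % p) 1 && Nat.ble 1 L &&
  run p ki (M + L) (adv p ki s (2 * a * a % p, a % p)) &&
  !(Nat.beq ((adv p ki (s + 2 * M) (2 * a * a % p, a % p)).2 % p) 0) &&
  !(Nat.beq ((adv p ki (s + 2 * (M + L)) (2 * a * a % p, a % p)).2 % p) 0) &&
  Nat.beq ((adv p ki (s + 2 * M) (2 * a * a % p, a % p)).1 *
      (adv p ki (s + 2 * (M + L)) (2 * a * a % p, a % p)).2 % p)
    ((adv p ki (s + 2 * (M + L)) (2 * a * a % p, a % p)).1 *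
      (adv p ki (s + 2 * M) (2 * a * a % p, a % p)).2 % p)

/-- Trial division up to `49`. -/
def primeOk (p : ℕ) : Bool :=
  Nat.ble 3 p && Nat.ble p 2400 &&
    (List.range 50).all fun q => Nat.ble q 1 || Nat.beq p q || !(Nat.beq (p % q) 0)

/-- All certificates of a table are fine. -/
def tabOk (s : ℕ) (T : List (ℕ × List (ℕ × ℕ × ℕ))) : Bool :=
  T.all fun e => primeOk e.1 &&
    e.2.all fun c => okk e.1 s c.1 c.2.1 c.2.2 (c.1 ^ (e.1 - 2) % e.1)

/-- The bit mask of the residues of a table entry. -/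
def mask : List (ℕ × ℕ × ℕ) → ℕ
  | [] => 0
  | c :: l => 2 ^ c.1 ||| mask l

/-- A bit mask together with its shift by `s`. -/
def dbl (s : ℕ) : ℕ → ℕ
  | 0 => 0
  | n + 1 => (n + 1) ||| (2 ^ s * (n + 1))

/-- Periodic extension of a bit mask. -/
def extend (p m : ℕ) : ℕ → ℕ
  | 0 => m
  | i + 1 => bif Nat.ble (p * 2 ^ i) 1000000 then dbl (p * 2 ^ i) (extend p m i) else extend p m i

/-- All numbers covered by a table. -/
def cover : List (ℕ × List (ℕ × ℕ × ℕ)) → ℕ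
  | [] => 1
  | e :: T => extend e.1 (mask e.2) 20 ||| cover T

/-- All numbers up to `10^6` are covered by a table. -/
def covOk (T : List (ℕ × List (ℕ × ℕ × ℕ))) : Bool :=
  Nat.beq (cover T % 2 ^ 1000001) (2 ^ 1000001 - 1)

/-- Certificates `(p, [(a, M, L), ...])` for the indices `3, 5, 7, ...`. -/
def tabThree : List (ℕ × List (ℕ × ℕ × ℕ)) := [
  (3, [(1, 0, 1),(2, 0, 1)]),
  (5, [(2, 0, 1),(3, 0, 1)]),
  (7, [(2, 0, 1),(5, 0, 1)]),
  (11, [(1, 0, 1),(2, 0, 1),(5, 0, 1),(6, 0, 1),(9, 0, 1),(10, 0, 1)]),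
  (13, [(3, 0, 2),(6, 0, 1),(7, 0, 1),(10, 0, 2)]),
  (17, [(1, 0, 2),(16, 0, 2)]),
  (19, [(2, 0, 2),(5, 1, 2),(6, 0, 3),(7, 1, 1),(9, 0, 1),(10, 0, 1),(12, 1, 1),(13, 0, 3),
    (14, 1, 2),(17, 0, 2)]),
  (23, [(6, 0, 1),(8, 0, 3),(15, 0, 3),(17, 0, 1)]),
  (29, [(2, 0, 2),(11, 0, 1),(14, 0, 1),(15, 0, 1),(18, 0, 1),(27, 0, 2)]),
  (31, [(6, 0, 1),(14, 1, 1),(17, 1, 1),(25, 0, 1)]),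
  (37, [(6, 0, 1),(8, 0, 2),(11, 0, 2),(13, 0, 2),(14, 0, 1),(18, 0, 1),(19, 0, 1),(23, 0, 1),
    (24, 0, 2),(26, 0, 2),(29, 0, 2),(31, 0, 1)]),
  (41, [(2, 0, 2),(11, 2, 1),(13, 0, 1),(18, 0, 3),(23, 0, 3),(28, 0, 1),(30, 2, 1),(39, 0, 2)]),
  (43, [(11, 0, 2),(12, 0, 1),(15, 0, 2),(17, 0, 1),(21, 0, 1),(22, 0, 1),(26, 0, 1),(28, 0, 2),
    (31, 0, 1),(32, 0, 2)]),
  (47, [(4, 0, 1),(20, 1, 2),(21, 1, 1),(26, 1, 1),(27, 1, 2),(43, 0, 1)]),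
  (53, [(6, 1, 2),(19, 0, 1),(22, 1, 1),(25, 1, 2),(26, 0, 1),(27, 0, 1),(28, 1, 2),(31, 1, 1),
    (34, 0, 1),(47, 1, 2)]),
  (59, [(7, 0, 1),(8, 1, 1),(11, 0, 2),(29, 0, 1),(30, 0, 1),(48, 0, 2),(51, 1, 1),(52, 0, 1)]),
  (61, [(3, 1, 2),(17, 0, 2),(24, 0, 1),(29, 0, 2),(30, 0, 1),(31, 0, 1),(32, 0, 2),(37, 0, 1),
    (44, 0, 2),(58, 1, 2)]),
  (67, [(4, 0, 2),(6, 0, 1),(18, 1, 1),(20, 0, 4),(33, 0, 1),(34, 0, 1),(47, 0, 4),(49, 1, 1),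
    (61, 0, 1),(63, 0, 2)]),
  (71, [(12, 2, 3),(16, 0, 1),(20, 0, 1),(28, 3, 1),(33, 0, 1),(38, 0, 1),(43, 3, 1),(51, 0, 1),
    (55, 0, 1),(59, 2, 3)]),
  (73, [(13, 0, 1),(20, 0, 1),(29, 0, 1),(33, 0, 1),(40, 0, 1),(44, 0, 1),(53, 0, 1),(60, 0, 1)]),
  (79, [(2, 1, 1),(6, 0, 1),(14, 0, 3),(18, 0, 6),(30, 4, 2),(33, 0, 1),(37, 1, 1),(42, 1, 1),
    (46, 0, 1),(49, 4, 2),(61, 0, 6),(65, 0, 3),(73, 0, 1),(77, 1, 1)]),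
  (83, [(12, 0, 3),(20, 0, 4),(21, 0, 3),(30, 0, 4),(34, 1, 2),(38, 0, 3),(41, 0, 1),(42, 0, 1),
    (45, 0, 3),(49, 1, 2),(53, 0, 4),(62, 0, 3),(63, 0, 4),(71, 0, 3)]),
  (89, [(3, 2, 2),(4, 0, 2),(9, 0, 2),(41, 0, 2),(48, 0, 2),(80, 0, 2),(85, 0, 2),(86, 2, 2)]),
  (97, [(12, 0, 2),(25, 0, 2),(30, 2, 1),(38, 1, 8),(40, 1, 1),(57, 1, 1),(59, 1, 8),(67, 2, 1),
    (72, 0, 2),(85, 0, 2)]),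
  (101, [(40, 0, 4),(50, 0, 1),(51, 0, 1),(61, 0, 4)]),
  (107, [(10, 0, 3),(24, 0, 1),(25, 1, 1),(32, 0, 3),(45, 0, 6),(50, 0, 2),(53, 0, 1),(54, 0, 1),
    (57, 0, 2),(62, 0, 6),(63, 1, 6),(75, 0, 3),(82, 1, 1),(83, 0, 1),(97, 0, 3)]),
  (109, [(9, 0, 2),(17, 0, 3),(24, 2, 1),(34, 0, 2),(40, 0, 1),(54, 0, 1),(55, 0, 1),(69, 0, 1),
    (75, 0, 2),(85, 2, 1),(92, 0, 3),(100, 0, 2)]),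
  (113, [(3, 0, 3),(5, 2, 1),(21, 0, 1),(32, 0, 4),(34, 1, 1),(35, 0, 1),(78, 0, 1),(79, 1, 1),
    (81, 0, 4),(92, 0, 1),(108, 2, 1),(110, 0, 3)]),
  (127, [(5, 0, 5),(48, 2, 1),(50, 1, 4),(77, 1, 4),(79, 2, 1),(122, 0, 5)]),
  (131, [(26, 1, 1),(39, 0, 2),(40, 0, 3),(57, 0, 4),(64, 0, 2),(65, 0, 1),(66, 0, 1),(67, 0, 2),
    (74, 0, 4),(91, 0, 3),(92, 0, 2),(105, 1, 1)]),
  (137, [(18, 0, 4),(34, 1, 2),(39, 0, 6),(46, 2, 1),(53, 0, 1),(84, 0, 1),(91, 2, 1),(103, 1, 2),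
    (119, 0, 4)]),
  (139, [(24, 0, 4),(27, 0, 2),(51, 0, 5),(57, 0, 3),(69, 0, 1),(70, 0, 1),(82, 0, 3),(112, 0, 2),
    (115, 0, 4)]),
  (149, [(47, 0, 2),(55, 0, 4),(57, 0, 1),(62, 0, 2),(65, 0, 2),(74, 0, 1),(75, 0, 1),(84, 0, 2),
    (87, 0, 2),(94, 0, 4),(102, 0, 2),(124, 2, 4)]),
  (151, [(3, 0, 3),(148, 0, 3)]),
  (157, [(13, 2, 2),(23, 0, 5),(24, 1, 1),(25, 0, 4),(34, 0, 2),(50, 2, 2),(61, 1, 1),(66, 0, 2),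
    (78, 0, 1),(79, 0, 1),(91, 0, 2),(96, 1, 1),(123, 0, 2),(132, 0, 4),(133, 1, 1),(134, 0, 5),
    (144, 2, 2)]),
  (163, [(2, 2, 1),(9, 0, 3),(23, 0, 2),(40, 0, 2),(69, 0, 1),(81, 0, 1),(82, 0, 1),(94, 0, 1),
    (123, 0, 2),(140, 0, 2),(154, 0, 3),(161, 2, 1)]),
  (167, [(26, 4, 1),(30, 0, 1),(76, 1, 3),(82, 0, 5),(91, 1, 3),(137, 0, 1)]),
  (173, [(61, 0, 2),(65, 0, 2),(82, 0, 2),(86, 0, 1),(87, 0, 1),(91, 0, 2),(108, 0, 2),(112, 0, 2)]),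
  (179, [(3, 1, 4),(17, 1, 1),(20, 2, 1),(27, 0, 1),(41, 0, 3),(59, 0, 8),(68, 0, 4),(90, 0, 1),
    (120, 0, 8),(138, 0, 3),(152, 0, 1),(162, 1, 1),(176, 1, 4)]),
  (181, [(27, 1, 2),(42, 0, 2),(47, 2, 3),(80, 1, 8),(90, 0, 1),(91, 0, 1),(101, 1, 8),(134, 2, 3),
    (139, 0, 2)]),
  (191, [(10, 0, 1),(63, 3, 2),(86, 0, 1),(128, 3, 2),(144, 0, 1)]),
  (193, [(24, 0, 2),(37, 0, 1),(53, 1, 1),(60, 0, 1),(82, 0, 3),(111, 0, 3),(133, 0, 1)]),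
  (197, [(54, 0, 2),(72, 0, 1),(74, 0, 2),(98, 0, 1),(99, 0, 1),(103, 0, 2),(123, 0, 2),(143, 0, 2),
    (145, 0, 2),(186, 0, 3)]),
  (199, [(187, 0, 4)]),
  (211, [(10, 0, 1),(68, 0, 5),(90, 1, 5),(91, 0, 2),(105, 0, 1),(106, 0, 1),(120, 0, 2),(121, 1, 5),
    (143, 0, 5),(201, 0, 1),(205, 0, 1)]),
  (223, [(45, 2, 2),(84, 2, 3),(96, 0, 3),(127, 0, 3),(139, 2, 3),(214, 1, 1)]),
  (227, [(7, 4, 1),(12, 0, 1),(23, 2, 1),(36, 0, 3),(145, 0, 6),(182, 2, 1),(204, 2, 1),(215, 0, 1)]),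
  (229, [(20, 0, 2),(21, 0, 2),(26, 0, 2),(34, 0, 2),(38, 0, 2),(39, 2, 1),(53, 0, 2),(99, 0, 6),
    (114, 0, 1),(125, 0, 2),(130, 0, 6),(176, 0, 2),(188, 0, 1),(190, 2, 1),(195, 0, 2),(208, 0, 2),
    (209, 0, 2)]),
  (233, [(207, 1, 4)]),
  (239, [(3, 0, 4),(11, 0, 3),(113, 2, 5),(116, 4, 3),(123, 4, 3)]),
  (241, [(47, 3, 2)]),
  (251, [(17, 0, 2),(59, 0, 3),(95, 2, 1),(102, 2, 2),(105, 0, 5),(125, 0, 1),(130, 3, 2),(146, 0, 5),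
    (169, 0, 1),(234, 0, 2)]),
  (257, [(35, 3, 2),(190, 0, 4),(199, 0, 2),(224, 0, 3)]),
  (263, [(70, 0, 1)]),
  (269, [(35, 0, 3),(74, 0, 2),(195, 0, 2),(213, 0, 2),(234, 0, 3)]),
  (277, [(135, 0, 3),(139, 0, 1),(150, 0, 1),(159, 0, 2),(200, 0, 2)]),
  (281, [(84, 0, 1),(163, 1, 2),(197, 0, 1)]),
  (283, [(30, 0, 2),(97, 0, 2),(141, 0, 1),(186, 0, 2),(253, 0, 2),(261, 0, 3)]),
  (293, [(11, 1, 2),(47, 0, 1),(147, 0, 1),(252, 0, 1),(282, 1, 2)]),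
  (307, [(36, 1, 2),(116, 0, 1),(136, 0, 2),(171, 0, 2),(196, 0, 1)]),
  (311, [(54, 5, 1)]),
  (313, [(130, 0, 1),(151, 0, 2)]),
  (317, [(127, 2, 1),(240, 0, 4),(248, 1, 2)]),
  (331, [(13, 0, 5),(37, 1, 4),(100, 1, 2),(165, 0, 1),(294, 1, 4)]),
  (337, [(62, 0, 1),(325, 1, 2)]),
  (347, [(26, 0, 1),(37, 0, 1),(310, 0, 1),(320, 2, 1)]),
  (349, [(297, 0, 2)]),
  (353, [(28, 1, 1),(78, 1, 2),(275, 1, 2)]),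
  (359, [(92, 1, 1)]),
  (367, [(16, 0, 1),(87, 1, 4),(157, 2, 4),(249, 1, 1)]),
  (373, [(186, 0, 1),(187, 0, 1),(242, 1, 1),(312, 0, 1)]),
  (383, [(178, 1, 3)]),
  (389, [(26, 0, 2),(196, 0, 2)]),
  (401, [(74, 0, 3),(84, 0, 3)]),
  (409, [(274, 0, 14)]),
  (421, [(92, 4, 1),(150, 1, 1),(271, 1, 1)]),
  (463, [(191, 0, 1)]),
  (467, [(75, 0, 3)]),
  (487, [(282, 1, 1)]),
  (491, [(363, 0, 1)]),
  (499, [(249, 0, 1)]),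
  (503, [(80, 1, 1),(423, 1, 1)]),
  (509, [(7, 0, 3)]),
  (557, [(462, 0, 4)]),
  (587, [(413, 0, 3)]),
  (613, [(307, 0, 1)]),
  (631, [(480, 3, 1)]),
  (661, [(586, 2, 4)]),
  (677, [(176, 0, 1),(674, 0, 2)]),
  (709, [(250, 0, 6)]),
  (727, [(474, 1, 1)]),
  (757, [(379, 0, 1)]),
  (839, [(187, 6, 3)]),
  (853, [(217, 0, 1)]),
  (1129, [(738, 1, 2)]),
  (1229, [(13, 0, 2)]),
  (1609, [(339, 0, 2)]),
  (1621, [(772, 0, 3)]),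
  (1637, [(1246, 0, 4)]),
  (1697, [(929, 5, 2)]),
  (1789, [(361, 0, 2)]),
  (1873, [(1295, 0, 2)])]

/-- Certificates `(p, [(a, M, L), ...])` for the indices `4, 6, 8, ...`. -/
def tabFour : List (ℕ × List (ℕ × ℕ × ℕ)) := [
  (3, [(1, 0, 1),(2, 0, 1)]),
  (5, [(2, 0, 1),(3, 0, 1)]),
  (7, [(1, 0, 2),(2, 0, 1),(5, 0, 1),(6, 0, 2)]),
  (11, [(1, 0, 1),(2, 0, 1),(5, 0, 1),(6, 0, 1),(9, 0, 1),(10, 0, 1)]),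
  (13, [(3, 0, 2),(6, 0, 1),(7, 0, 1),(10, 0, 2)]),
  (17, [(1, 0, 2),(3, 0, 2),(14, 0, 2),(16, 0, 2)]),
  (19, [(6, 0, 3),(9, 0, 1),(10, 0, 1),(13, 0, 3)]),
  (23, [(1, 0, 2),(6, 0, 1),(8, 0, 3),(9, 0, 2),(14, 0, 2),(15, 0, 3),(17, 0, 1),(22, 0, 2)]),
  (29, [(2, 0, 2),(11, 0, 1),(12, 1, 1),(14, 0, 1),(15, 0, 1),(17, 1, 1),(18, 0, 1),(27, 0, 2)]),
  (31, [(6, 0, 1),(10, 0, 2),(14, 0, 1),(17, 0, 1),(21, 0, 2),(25, 0, 1)]),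
  (37, [(6, 0, 1),(8, 0, 2),(10, 0, 2),(11, 0, 2),(14, 0, 1),(17, 0, 1),(18, 0, 1),(19, 0, 1),
    (20, 0, 1),(23, 0, 1),(26, 0, 2),(27, 0, 2),(29, 0, 2),(31, 0, 1)]),
  (41, [(2, 0, 2),(13, 0, 1),(14, 0, 4),(15, 1, 2),(26, 1, 2),(27, 0, 4),(28, 0, 1),(39, 0, 2)]),
  (43, [(4, 0, 1),(12, 0, 1),(14, 0, 2),(17, 0, 1),(21, 0, 1),(22, 0, 1),(26, 0, 1),(29, 0, 2),
    (31, 0, 1),(39, 0, 1)]),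
  (47, [(4, 0, 1),(11, 0, 4),(12, 0, 4),(15, 1, 1),(19, 1, 1),(28, 1, 1),(32, 1, 1),(35, 0, 4),
    (36, 0, 4),(43, 0, 1)]),
  (53, [(19, 0, 1),(22, 0, 1),(26, 0, 1),(27, 0, 1),(31, 0, 1),(34, 0, 1)]),
  (59, [(1, 1, 1),(7, 0, 1),(8, 1, 1),(25, 1, 2),(29, 0, 1),(30, 0, 1),(34, 1, 2),(51, 1, 1),
    (52, 0, 1),(58, 1, 1)]),
  (61, [(1, 1, 2),(2, 0, 2),(12, 0, 4),(17, 0, 2),(24, 0, 1),(29, 0, 2),(30, 0, 1),(31, 0, 1),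
    (32, 0, 2),(37, 0, 1),(44, 0, 2),(49, 0, 4),(59, 0, 2),(60, 1, 2)]),
  (67, [(5, 1, 2),(6, 0, 1),(9, 0, 6),(32, 0, 3),(33, 0, 1),(34, 0, 1),(35, 0, 3),(58, 0, 6),
    (61, 0, 1),(62, 1, 2)]),
  (71, [(6, 1, 3),(7, 1, 1),(11, 0, 1),(16, 0, 1),(20, 0, 1),(30, 1, 2),(33, 0, 1),(38, 0, 1),
    (41, 1, 2),(51, 0, 1),(55, 0, 1),(60, 0, 1),(64, 1, 1),(65, 1, 3)]),
  (73, [(6, 2, 4),(12, 0, 6),(13, 0, 1),(14, 1, 1),(20, 0, 1),(24, 0, 6),(29, 0, 1),(32, 0, 2),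
    (33, 0, 1),(40, 0, 1),(41, 0, 2),(44, 0, 1),(49, 0, 6),(53, 0, 1),(59, 1, 1),(60, 0, 1),
    (61, 0, 6),(67, 2, 4)]),
  (79, [(2, 1, 1),(6, 0, 1),(11, 1, 1),(14, 0, 3),(16, 0, 2),(22, 0, 2),(33, 0, 1),(46, 0, 1),
    (57, 0, 2),(63, 0, 2),(65, 0, 3),(68, 1, 1),(73, 0, 1),(77, 1, 1)]),
  (83, [(4, 2, 3),(12, 0, 3),(16, 0, 4),(21, 0, 3),(38, 0, 3),(41, 0, 1),(42, 0, 1),(45, 0, 3),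
    (62, 0, 3),(67, 0, 4),(71, 0, 3)]),
  (89, [(4, 0, 2),(9, 0, 2),(12, 3, 3),(16, 0, 2),(37, 1, 1),(52, 1, 1),(73, 0, 2),(77, 3, 3),
    (80, 0, 2),(85, 0, 2)]),
  (97, [(10, 0, 4),(12, 0, 2),(17, 0, 3),(25, 0, 2),(30, 1, 1),(37, 0, 2),(40, 1, 1),(57, 1, 1),
    (60, 0, 2),(67, 1, 1),(72, 0, 2),(80, 0, 3),(85, 0, 2),(87, 0, 4)]),
  (101, [(10, 1, 1),(12, 2, 1),(50, 0, 1),(51, 0, 1),(89, 2, 1),(91, 1, 1)]),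
  (103, [(5, 0, 2),(9, 1, 1),(36, 1, 2),(46, 1, 1),(57, 1, 1),(67, 1, 2),(79, 0, 1),(97, 1, 3),
    (98, 0, 2)]),
  (107, [(10, 0, 3),(24, 0, 1),(25, 1, 1),(32, 0, 3),(53, 0, 1),(54, 0, 1),(69, 0, 4),(75, 0, 3),
    (82, 1, 1),(83, 0, 1),(97, 0, 3)]),
  (109, [(5, 1, 6),(9, 0, 2),(17, 0, 3),(19, 0, 1),(34, 0, 2),(40, 0, 1),(51, 0, 2),(54, 0, 1),
    (58, 0, 2),(69, 0, 1),(75, 0, 2),(90, 0, 1),(92, 0, 3),(100, 0, 2),(104, 1, 6)]),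
  (113, [(3, 0, 3),(6, 1, 1),(21, 0, 1),(28, 0, 4),(35, 0, 1),(36, 0, 2),(52, 0, 4),(61, 0, 4),
    (77, 0, 2),(78, 0, 1),(81, 0, 4),(85, 0, 4),(92, 0, 1),(107, 1, 1),(110, 0, 3)]),
  (127, [(5, 0, 5),(23, 1, 1),(44, 0, 2),(48, 1, 1),(79, 1, 1),(83, 0, 2),(104, 1, 1),(121, 0, 2),
    (122, 0, 5)]),
  (131, [(8, 0, 2),(20, 0, 4),(26, 0, 1),(29, 0, 10),(40, 0, 3),(66, 0, 1),(102, 0, 10),(105, 0, 1),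
    (111, 0, 4)]),
  (137, [(53, 0, 1),(84, 0, 1),(119, 0, 4)]),
  (139, [(15, 0, 4),(39, 0, 4),(52, 0, 2),(57, 0, 3),(82, 0, 3),(87, 0, 2),(124, 0, 4)]),
  (149, [(47, 0, 2),(57, 0, 1),(60, 0, 1),(74, 0, 1),(89, 0, 1),(92, 0, 1),(94, 0, 4)]),
  (151, [(3, 0, 3),(45, 1, 4),(62, 0, 1),(80, 1, 6),(89, 0, 1),(106, 1, 4),(129, 0, 6),(150, 0, 2)]),
  (157, [(22, 1, 1),(23, 0, 5),(24, 1, 1),(34, 0, 2),(78, 0, 1),(96, 1, 1),(134, 0, 5),(135, 1, 1),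
    (136, 0, 8)]),
  (163, [(74, 1, 1),(81, 0, 1),(89, 1, 1)]),
  (167, [(3, 0, 4),(28, 0, 4),(76, 1, 3),(85, 0, 5),(91, 1, 3),(137, 0, 1),(148, 0, 2),(156, 0, 2)]),
  (173, [(82, 0, 2),(87, 0, 1),(108, 0, 2),(112, 0, 2)]),
  (179, [(17, 0, 1),(27, 0, 1),(89, 0, 1),(98, 0, 3),(162, 0, 1)]),
  (181, [(42, 0, 2),(91, 0, 1)]),
  (191, [(5, 0, 6),(86, 0, 1),(104, 0, 2),(105, 0, 1)]),
  (193, [(24, 0, 2),(51, 3, 1),(111, 0, 3),(133, 0, 1),(154, 1, 6)]),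
  (197, [(125, 0, 1)]),
  (199, [(7, 0, 2),(53, 0, 16),(146, 0, 16)]),
  (211, [(6, 0, 1),(105, 0, 1),(200, 5, 1)]),
  (223, [(3, 0, 4),(96, 0, 3),(139, 1, 3)]),
  (227, [(36, 0, 3),(110, 0, 4),(147, 0, 1)]),
  (229, [(53, 0, 2),(209, 0, 2)]),
  (239, [(20, 0, 8)]),
  (251, [(82, 0, 1),(192, 0, 3)]),
  (269, [(3, 0, 3)]),
  (271, [(61, 0, 3),(140, 0, 2)]),
  (277, [(135, 0, 3)]),
  (281, [(77, 1, 1),(146, 0, 2)]),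
  (283, [(67, 2, 1),(142, 0, 1)]),
  (307, [(91, 0, 1),(191, 0, 1)]),
  (331, [(13, 0, 5)]),
  (337, [(61, 1, 1)]),
  (347, [(26, 0, 1)]),
  (349, [(248, 2, 1)]),
  (359, [(82, 0, 1)]),
  (367, [(249, 0, 1)]),
  (373, [(71, 0, 2),(126, 0, 1),(234, 0, 1),(312, 0, 1)]),
  (383, [(178, 0, 3)]),
  (397, [(21, 0, 14),(233, 0, 2)]),
  (439, [(118, 0, 1)]),
  (449, [(284, 0, 1)]),
  (491, [(490, 1, 1)]),
  (509, [(254, 0, 1)]),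
  (743, [(23, 0, 4)])]

set_option exponentiation.threshold 2000000

theorem tabThree_ok : tabOk 2 tabThree = true := by decide +kernel
theorem tabFour_ok : tabOk 3 tabFour = true := by decide +kernel
theorem tabThree_cov : covOk tabThree = true := by decide +kernel
theorem tabFour_cov : covOk tabFour = true := by decide +kernel

/-! ### The coverage -/

theorem mask_sound (l : List (ℕ × ℕ × ℕ)) (j : ℕ) (h : (mask l).testBit j = true) :
    ∃ c ∈ l, c.1 = j := by
  induction l with
  | nil => simp [mask] at h
  | cons c l ih =>
    rw [mask, Nat.testBit_or, Bool.or_eq_true] at h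
    rcases h with h | h
    · rw [Nat.testBit_two_pow] at h
      exact ⟨c, by simp, by simpa using h⟩
    · obtain ⟨c', hc, e⟩ := ih h
      exact ⟨c', by simp [hc], e⟩

theorem dbl_eq (s x : ℕ) : dbl s x = x ||| (2 ^ s * x) := by
  cases x with
  | zero => simp [dbl]
  | succ n => rfl

theorem extend_sound (p m t j : ℕ) (h : (extend p m t).testBit j = true) :
    ∃ i, m.testBit i = true ∧ i ≡ j [MOD p] := by
  induction t generalizing j with
  | zero => exact ⟨j, h, rfl⟩
  | succ t ih =>
    rw [extend] at h
    cases hb : Nat.ble (p * 2 ^ t) 1000000 with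
    | false => rw [hb, cond_false] at h; exact ih j h
    | true =>
      rw [hb, cond_true, dbl_eq, Nat.testBit_or, Bool.or_eq_true] at h
      rcases h with h | h
      · exact ih j h
      · rw [Nat.testBit_two_pow_mul, Bool.and_eq_true] at h
        obtain ⟨i, hi, e⟩ := ih _ h.2
        refine ⟨i, hi, e.trans ?_⟩
        have h1 : p * 2 ^ t ≤ j := by simpa using h.1
        exact ((Nat.modEq_iff_dvd' (Nat.sub_le _ _)).2
          (by rw [Nat.sub_sub_self h1]; exact dvd_mul_right _ _))

theorem cover_sound (T : List (ℕ × List (ℕ × ℕ × ℕ))) (j : ℕ) (hj : j ≠ 0)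
    (h : (cover T).testBit j = true) :
    ∃ e ∈ T, ∃ c ∈ e.2, c.1 ≡ j [MOD e.1] := by
  induction T with
  | nil =>
    rw [cover, ← pow_zero 2, Nat.testBit_two_pow] at h
    exact absurd (by simpa using h : 0 = j).symm hj
  | cons e T ih =>
    rw [cover, Nat.testBit_or, Bool.or_eq_true] at h
    rcases h with h | h
    · obtain ⟨i, hi, hm⟩ := extend_sound _ _ _ _ h
      obtain ⟨c, hc, rfl⟩ := mask_sound _ _ hi
      exact ⟨e, by simp, c, hc, hm⟩
    · obtain ⟨e', he, r⟩ := ih h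
      exact ⟨e', by simp [he], r⟩

theorem cov_sound (T : List (ℕ × List (ℕ × ℕ × ℕ))) (hT : covOk T = true) (j : ℕ) (hj : j ≠ 0)
    (hj' : j ≤ 10 ^ 6) : ∃ e ∈ T, ∃ c ∈ e.2, c.1 ≡ j [MOD e.1] := by
  apply cover_sound T j hj
  have h := Nat.eq_of_beq_eq_true hT
  have hlt : j < 1000001 := by omega
  generalize 1000001 = B at h hlt
  have h2 : (cover T % 2 ^ B).testBit j = true := by
    rw [h, Nat.testBit_two_pow_sub_one]; simpa using hlt
  rw [Nat.testBit_mod_two_pow, Bool.and_eq_true] at h2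
  exact h2.2

/-! ### The periodicity argument in a field -/

theorem periodic {F : Type*} [Field F] (k : F) (hk : k ≠ 0) (D E : ℕ → F)
    (hD : ∀ n, D (n + 1) = D n ^ 2 + E n ^ 2) (hE : ∀ n, k * E (n + 1) = D n * E n)
    (s M L : ℕ) (hL : 1 ≤ L) (hn : ∀ i ≤ M + L, ¬ IsSquare (D (s + 2 * i)))
    (h1 : E (s + 2 * M) ≠ 0) (h2 : E (s + 2 * (M + L)) ≠ 0)
    (h3 : D (s + 2 * M) * E (s + 2 * (M + L)) = D (s + 2 * (M + L)) * E (s + 2 * M)) (i : ℕ) :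
    ¬ IsSquare (D (s + 2 * i)) := by
  have step : ∀ n n' (c : F), D n = c * D n' → E n = c * E n' →
      D (n + 1) = c ^ 2 * D (n' + 1) ∧ E (n + 1) = c ^ 2 * E (n' + 1) := by
    intro n n' c a b
    refine ⟨by rw [hD, hD, a, b]; ring, ?_⟩
    apply mul_left_cancel₀ hk
    rw [hE, a, b]
    linear_combination (-c ^ 2) * hE n'
  have key : ∀ i, ¬ IsSquare (D (s + 2 * i)) ∧ ∃ j, j < M + L ∧ ∃ c : F, c ≠ 0 ∧
      D (s + 2 * i) = c * D (s + 2 * j) ∧ E (s + 2 * i) = c * E (s + 2 * j) := by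
    intro i
    induction i with
    | zero => exact ⟨hn 0 (by omega), 0, by omega, 1, one_ne_zero, by simp, by simp⟩
    | succ i ih =>
      obtain ⟨-, j, hj, c, hc, a, b⟩ := ih
      obtain ⟨a1, b1⟩ := step _ _ _ a b
      obtain ⟨a2, b2⟩ := step _ _ _ a1 b1
      have a3 : D (s + 2 * (i + 1)) = (c ^ 2) ^ 2 * D (s + 2 * (j + 1)) := a2
      have b3 : E (s + 2 * (i + 1)) = (c ^ 2) ^ 2 * E (s + 2 * (j + 1)) := b2
      refine ⟨?_, ?_⟩
      · rintro ⟨x, hx⟩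
        apply hn (j + 1) (by omega)
        refine ⟨x / c ^ 2, ?_⟩
        have hc2 : c ^ 2 ≠ 0 := pow_ne_zero _ hc
        rw [div_mul_div_comm, ← hx, a3]
        field_simp
      · by_cases hjj : j + 1 < M + L
        · exact ⟨j + 1, hjj, _, pow_ne_zero _ (pow_ne_zero _ hc), a3, b3⟩
        · have : j + 1 = M + L := by omega
          rw [this] at a3 b3
          refine ⟨M, by omega, (c ^ 2) ^ 2 * (E (s + 2 * (M + L)) / E (s + 2 * M)),
            mul_ne_zero (pow_ne_zero _ (pow_ne_zero _ hc)) (div_ne_zero h2 h1), ?_, ?_⟩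
          · rw [a3]
            field_simp
            linear_combination -h3
          · rw [b3]
            field_simp
  exact (key i).1

/-! ### Soundness of the modular check -/

theorem prime_sound (p : ℕ) (h : primeOk p = true) : p.Prime ∧ 3 ≤ p := by
  simp only [primeOk, Bool.and_eq_true, List.all_eq_true, List.mem_range, Bool.or_eq_true,
    Bool.not_eq_true', Nat.ble_eq] at h
  obtain ⟨⟨h3, h24⟩, hq⟩ := h
  refine ⟨?_, h3⟩
  by_contra hp
  have hp1 : p ≠ 1 := by omega
  have hm := Nat.minFac_sq_le_self (by omega : 0 < p) hp
  have hpr := Nat.minFac_prime hp1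
  have hlt : p.minFac < 50 := by
    by_contra hge
    have h50 : 50 ^ 2 ≤ p.minFac ^ 2 := Nat.pow_le_pow_left (by omega) 2
    omega
  have hdvd := Nat.minFac_dvd p
  rcases hq _ hlt with (h | h) | h
  · have := hpr.two_le; omega
  · have := Nat.eq_of_beq_eq_true h
    rw [this] at hp; exact hp hpr
  · have h0 : p % p.minFac = 0 := Nat.mod_eq_zero_of_dvd hdvd
    rw [h0] at h
    exact absurd h (by decide)

theorem nonres_sound (p d : ℕ) [Fact p.Prime] (h3 : 3 ≤ p) (h : nonres p d = true) :
    ¬ IsSquare (d : ZMod p) := by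
  have h := Nat.eq_of_beq_eq_true h
  have hodd : p % 2 = 1 := by
    rcases (Fact.out : p.Prime).eq_two_or_odd with h | h <;> omega
  have e : ((d : ZMod p)) ^ ((p - 1) / 2) = -1 := by
    have := congrArg (Nat.cast : ℕ → ZMod p) h
    rw [ZMod.natCast_mod, Nat.cast_pow, Nat.cast_sub (by omega)] at this
    simpa using this
  have : Fact (2 < p) := ⟨by omega⟩
  rintro ⟨x, hx⟩
  rw [hx, ← pow_two, ← pow_mul, show 2 * ((p - 1) / 2) = p - 1 by omega] at e
  by_cases hx0 : x = 0
  · rw [hx0, zero_pow (by omega)] at e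
    simp at e
  · rw [ZMod.pow_card_sub_one_eq_one hx0] at e
    exact ZMod.neg_one_ne_one e.symm

section
variable {p : ℕ} [Fact p.Prime] {ki : ℕ} {k : ZMod p} {D E : ℕ → ZMod p}

theorem nxt_sound (hki : k * (ki : ZMod p) = 1)
    (hD : ∀ n, D (n + 1) = D n ^ 2 + E n ^ 2) (hE : ∀ n, k * E (n + 1) = D n * E n)
    (n : ℕ) (s : ℕ × ℕ) (h1 : (s.1 : ZMod p) = D n) (h2 : (s.2 : ZMod p) = E n) :
    ((nxt p ki s).1 : ZMod p) = D (n + 1) ∧ ((nxt p ki s).2 : ZMod p) = E (n + 1) := by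
  simp only [nxt, ZMod.natCast_mod, Nat.cast_add, Nat.cast_mul, h1, h2]
  refine ⟨by rw [hD]; ring, ?_⟩
  linear_combination (-(ki : ZMod p)) * hE n + E (n + 1) * hki

theorem adv_sound (hki : k * (ki : ZMod p) = 1)
    (hD : ∀ n, D (n + 1) = D n ^ 2 + E n ^ 2) (hE : ∀ n, k * E (n + 1) = D n * E n)
    (i n : ℕ) (s : ℕ × ℕ) (h1 : (s.1 : ZMod p) = D n) (h2 : (s.2 : ZMod p) = E n) :
    ((adv p ki i s).1 : ZMod p) = D (n + i) ∧ ((adv p ki i s).2 : ZMod p) = E (n + i) := by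
  induction i generalizing n s with
  | zero => exact ⟨h1, h2⟩
  | succ i ih =>
    obtain ⟨a, b⟩ := nxt_sound hki hD hE n s h1 h2
    have := ih (n + 1) _ a b
    rw [show n + 1 + i = n + (i + 1) by ring] at this
    exact this

theorem run_sound (h3 : 3 ≤ p) (hki : k * (ki : ZMod p) = 1)
    (hD : ∀ n, D (n + 1) = D n ^ 2 + E n ^ 2) (hE : ∀ n, k * E (n + 1) = D n * E n)
    (j n : ℕ) (s : ℕ × ℕ) (h1 : (s.1 : ZMod p) = D n) (h2 : (s.2 : ZMod p) = E n)
    (h : run p ki j s = true) : ∀ i ≤ j, ¬ IsSquare (D (n + 2 * i)) := by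
  induction j generalizing n s with
  | zero =>
    intro i hi
    obtain rfl : i = 0 := by omega
    have := nonres_sound p s.1 h3 h
    rwa [h1] at this
  | succ j ih =>
    rw [run, Bool.and_eq_true] at h
    intro i hi
    rcases i with _ | i
    · have := nonres_sound p s.1 h3 h.1
      rwa [h1] at this
    · obtain ⟨a, b⟩ := nxt_sound hki hD hE n s h1 h2
      obtain ⟨a, b⟩ := nxt_sound hki hD hE _ _ a b
      have := ih _ _ a b h.2 i (by omega)
      rwa [show n + 1 + 1 + 2 * i = n + 2 * (i + 1) by ring] at this

end

theorem cast_ne_zero_of_check (p x : ℕ) (h : (Nat.beq (x % p) 0) = false) :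
    (x : ZMod p) ≠ 0 := by
  intro h0
  rw [ZMod.natCast_eq_zero_iff] at h0
  rw [Nat.mod_eq_zero_of_dvd h0] at h
  exact absurd h (by decide)

theorem okk_sound (p s a M L ki : ℕ) [Fact p.Prime] (h3 : 3 ≤ p) (h : okk p s a M L ki = true)
    (D E : ℕ → ZMod p) (hD0 : D 0 = 2 * (a : ZMod p) ^ 2) (hE0 : E 0 = a)
    (hD : ∀ n, D (n + 1) = D n ^ 2 + E n ^ 2)
    (hE : ∀ n, (a : ZMod p) * E (n + 1) = D n * E n) (i : ℕ) :
    ¬ IsSquare (D (s + 2 * i)) := by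
  simp only [okk, Bool.and_eq_true, Bool.not_eq_true', Nat.ble_eq] at h
  obtain ⟨⟨⟨⟨⟨c1, c2⟩, c3⟩, c4⟩, c5⟩, c6⟩ := h
  have hki : (a : ZMod p) * (ki : ZMod p) = 1 := by
    have := congrArg (Nat.cast : ℕ → ZMod p) (Nat.eq_of_beq_eq_true c1)
    simpa using this
  have i1 : (((2 * a * a % p, a % p) : ℕ × ℕ).1 : ZMod p) = D 0 := by
    rw [hD0]; simp; ring
  have i2 : (((2 * a * a % p, a % p) : ℕ × ℕ).2 : ZMod p) = E 0 := by
    rw [hE0]; simp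
  have A := fun t => adv_sound hki hD hE t 0 _ i1 i2
  simp only [zero_add] at A
  have hk : (a : ZMod p) ≠ 0 := left_ne_zero_of_mul_eq_one hki
  refine periodic (a : ZMod p) hk D E hD hE s M L c2
    (run_sound h3 hki hD hE _ _ _ (A s).1 (A s).2 c3) ?_ ?_ ?_ i
  · rw [← (A _).2]; exact cast_ne_zero_of_check _ _ c4
  · rw [← (A _).2]; exact cast_ne_zero_of_check _ _ c5
  · have := congrArg (Nat.cast : ℕ → ZMod p) (Nat.eq_of_beq_eq_true c6)
    rw [ZMod.natCast_mod, ZMod.natCast_mod, Nat.cast_mul, Nat.cast_mul] at this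
    rw [← (A _).2, ← (A _).2, ← (A _).1, ← (A _).1]
    exact this

theorem table_sound (s : ℕ) (T : List (ℕ × List (ℕ × ℕ × ℕ))) (hT : tabOk s T = true)
    (hC : covOk T = true) (k : ℕ) (hk0 : k ≠ 0) (hk : k ≤ 10 ^ 6) (d e : ℕ → ℤ)
    (hd0 : d 0 = 2 * (k : ℤ) ^ 2) (he0 : e 0 = k)
    (hd : ∀ n, d (n + 1) = d n ^ 2 + e n ^ 2) (he : ∀ n, (k : ℤ) * e (n + 1) = d n * e n)
    (i : ℕ) : ¬ ∃ x : ℤ, d (s + 2 * i) = x ^ 2 := by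
  obtain ⟨⟨p, l⟩, hp, ⟨a, M, L⟩, hc, hm⟩ := cov_sound T hC k hk0 hk
  have h1 := List.all_eq_true.1 hT _ hp
  rw [Bool.and_eq_true] at h1
  have h2 := List.all_eq_true.1 h1.2 _ hc
  obtain ⟨hpp, h3⟩ := prime_sound p h1.1
  have : Fact p.Prime := ⟨hpp⟩
  have hak : (a : ZMod p) = (k : ZMod p) := (ZMod.natCast_eq_natCast_iff _ _ _).2 hm
  have := okk_sound p s a M L _ h3 h2 (fun n => (d n : ZMod p)) (fun n => (e n : ZMod p))
    (by simp [hd0, hak]) (by simp [he0, hak]) (fun n => by simp [hd])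
    (fun n => by
      have := congrArg (Int.cast : ℤ → ZMod p) (he n)
      push_cast at this
      rw [hak]; exact this) i
  rintro ⟨x, hx⟩
  exact this ⟨(x : ZMod p), by simp only [hx]; push_cast; ring⟩

theorem main_nat (k : ℕ) (hk0 : k ≠ 0) (hk : k ≤ 10 ^ 6) (d e : ℕ → ℤ)
    (hd0 : d 0 = 2 * (k : ℤ) ^ 2) (he0 : e 0 = k)
    (hd : ∀ n, d (n + 1) = d n ^ 2 + e n ^ 2) (he : ∀ n, (k : ℤ) * e (n + 1) = d n * e n)
    (n : ℕ) : ¬ ∃ x : ℤ, d n = x ^ 2 := by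
  have hkpos : (0 : ℤ) < k := by exact_mod_cast Nat.pos_of_ne_zero hk0
  rcases n with _ | _ | n
  · rintro ⟨x, hx⟩
    rw [hd0] at hx
    have hdv : (k : ℤ) ∣ x := (Int.pow_dvd_pow_iff two_ne_zero).1 ⟨2, by rw [← hx]; ring⟩
    obtain ⟨y, rfl⟩ := hdv
    have h2 : (k : ℤ) ^ 2 * (y ^ 2) = (k : ℤ) ^ 2 * 2 := by linear_combination -hx
    have h3 := mul_left_cancel₀ (by positivity) h2
    have : y < 2 := by nlinarith
    have : -2 < y := by nlinarith
    interval_cases y <;> omega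
  · rintro ⟨x, hx⟩
    rw [hd, hd0, he0] at hx
    have hdv : (k : ℤ) ∣ x := (Int.pow_dvd_pow_iff two_ne_zero).1
      ⟨4 * (k : ℤ) ^ 2 + 1, by rw [← hx]; ring⟩
    obtain ⟨y, rfl⟩ := hdv
    have h2 : (k : ℤ) ^ 2 * (|y| ^ 2) = (k : ℤ) ^ 2 * (4 * (k : ℤ) ^ 2 + 1) := by
      rw [sq_abs]; linear_combination -hx
    have h3 := mul_left_cancel₀ (by positivity) h2
    have h4 := abs_nonneg y
    have : 2 * (k : ℤ) < |y| := by nlinarith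
    nlinarith
  · rcases Nat.even_or_odd' n with ⟨i, rfl | rfl⟩
    · have := table_sound 2 tabThree tabThree_ok tabThree_cov k hk0 hk d e hd0 he0 hd he i
      rwa [show 2 + 2 * i = 2 * i + 1 + 1 by ring] at this
    · have := table_sound 3 tabFour tabFour_ok tabFour_cov k hk0 hk d e hd0 he0 hd he i
      rwa [show 3 + 2 * i = 2 * i + 1 + 1 + 1 by ring] at this

theorem main_int (k : ℤ) (h1 : 1 ≤ |k|) (h2 : |k| ≤ 10 ^ 6) (d e : ℕ → ℤ)
    (hd0 : d 0 = 2 * k ^ 2) (he0 : e 0 = k)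
    (hd : ∀ n, d (n + 1) = d n ^ 2 + e n ^ 2) (he : ∀ n, k * e (n + 1) = d n * e n)
    (n : ℕ) : ¬ ∃ x : ℤ, d n = x ^ 2 := by
  rw [Int.abs_eq_natAbs] at h1 h2
  have hk0 : k.natAbs ≠ 0 := by omega
  have hk1 : k.natAbs ≤ 10 ^ 6 := by omega
  rcases le_total 0 k with h | h
  · have hc : ((k.natAbs : ℕ) : ℤ) = k := by omega
    exact main_nat k.natAbs hk0 hk1 d e (by rw [hc, hd0]) (by rw [hc, he0]) hd
      (by rw [hc]; exact he) n
  · have hc : ((k.natAbs : ℕ) : ℤ) = -k := by omega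
    refine main_nat k.natAbs hk0 hk1 d (fun n => (-1) ^ (n + 1) * e n) (by rw [hc, hd0]; ring)
      (by rw [hc, he0]; ring) (fun n => ?_) (fun n => ?_) n
    · rw [hd, mul_pow, ← pow_mul, mul_comm (n + 1) 2, pow_mul]; norm_num
    · rw [hc]; linear_combination (-1) ^ (n + 1) * he n

end SqFree18

/-- for the sequences `δ_n, ε_n ∈ ℤ[k]` given by `δ_1 = 2k²`, `ε_1 = k`,
`δ_n = δ_{n−1}² + ε_{n−1}²` and `k·ε_n = δ_{n−1}·ε_{n−1}` (for `n ≥ 2`): for every integer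
`k₀` with `1 ≤ |k₀| ≤ 10^6` and every `n ≥ 1`, the integer `δ_n(k₀)` is not a square in `ℤ`. -/
theorem stmt_18 (δ ε : ℕ → Polynomial ℤ)
    (hδ1 : δ 1 = Polynomial.C 2 * Polynomial.X ^ 2)
    (hε1 : ε 1 = Polynomial.X)
    (hδ : ∀ n, 2 ≤ n → δ n = (δ (n - 1)) ^ 2 + (ε (n - 1)) ^ 2)
    (hε : ∀ n, 2 ≤ n → Polynomial.X * ε n = δ (n - 1) * ε (n - 1))
    (k₀ : ℤ) (h1 : 1 ≤ |k₀|) (h2 : |k₀| ≤ 10 ^ 6) :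
    ∀ n, 1 ≤ n → ¬ ∃ a : ℤ, (δ n).eval k₀ = a ^ 2 := by
  intro n hn
  obtain ⟨m, rfl⟩ : ∃ m, n = m + 1 := ⟨n - 1, by omega⟩
  refine SqFree18.main_int k₀ h1 h2 (fun j => (δ (j + 1)).eval k₀) (fun j => (ε (j + 1)).eval k₀)
    ?_ ?_ ?_ ?_ m
  · simp [hδ1]
  · simp [hε1]
  · intro j
    simp [hδ (j + 1 + 1) (by omega)]
  · intro j
    have := congrArg (Polynomial.eval k₀) (hε (j + 1 + 1) (by omega))
    simpa using this
end
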